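/- If f ∈ L^∞(ℝⁿ) and Y ⊆ L¹(ℝⁿ) is a set of functions with f * g = 0 for every g ∈ Y, then the support of the tempered distribution f̂ is contained in Z(Y) = ⋂_{g ∈ Y} {ξ : ĝ(ξ) = 0}. -/

import Mathlib

/-! For a Schwartz function `φ` put `F x = ∫ f (x + y) (𝓕 φ) y dy` (`corr f (𝓕 φ)`), a bounded
continuous function with `F 0 = ∫ f · 𝓕 φ`; the goal is `F 0 = 0`.

*Locally* (`local_vanish`). Suppose `𝓕 g ξ ≠ 0` and let `φ` be supported in a ball of radius `1 / ε`
around `ξ`. Let `K` be a Schwartz function with `𝓕 K = 1` on the unit ball. Since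
`φ v = φ v · 𝓕 K (ε (v - ξ))`, the function `F` is reproduced by averaging against a dilated and
modulated `K` (`corr_mod`). Shifting this formula gives a Bernstein type estimate
`|e(-⟨t, ξ⟩) F x - F (x - t)| ≤ sup |F| · ω(t / ε)`, where `ω` is the `L¹` modulus of continuity of
`K`. As `f * g = 0` forces `F * g = 0`, integrating against `g` yields
`|𝓕 g ξ| |F x| ≤ sup |F| · ∫ |g t| ω(t / ε) dt`. The last integral tends to `0` as `ε → ∞` by dominated
convergence, so for large `ε` this gives `sup |F| ≤ sup |F| / 2`, that is `F = 0`. This replaces the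
Neumann series in the usual proof of Wiener's local inversion theorem.

*Globally.* A smooth partition of unity extends the vanishing to compactly supported `φ`
(`compact_vanish`). For general `φ`, the same formula `corr_mod` with `ξ = 0` and `ε → 0` recovers
`F 0` as a limit of pairings with wide cutoffs of `φ` (`vanish_of_compact`).
-/

open MeasureTheory SchwartzMap
open scoped FourierTransform

section Wiener

open Filter Topology Real
open scoped ContDiff

variable {E : Type*} [NormedAddCommGroup E] [InnerProductSpace ℝ E] [FiniteDimensional ℝ E]
  [MeasurableSpace E] [BorelSpace E]

/-- The cross-correlation `x ↦ ∫ f (x + y) Φ(y) dy`, written after the substitution `s = x + y`. -/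
noncomputable def corr (f Φ : E → ℂ) (x : E) : ℂ := ∫ s, f s * Φ (s - x)

/-- The `L¹` modulus of continuity of `Φ` under translation by `s`. -/
noncomputable def omega (Φ : E → ℂ) (s : E) : ℝ := ∫ u, ‖Φ (u - s) - Φ u‖

/-- Translation is continuous in `L¹`; for Schwartz functions the polynomial decay provides a
dominating function for all translations by vectors of norm at most one. -/
theorem omega_tendsto (Φ : 𝓢(E, ℂ)) : Tendsto (omega (Φ : E → ℂ)) (𝓝 0) (𝓝 0) := by
  obtain ⟨A, hA0, hA⟩ : ∃ A : ℝ, 0 ≤ A ∧ ∀ u, ‖Φ u‖ ≤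
      A * (1 + ‖u‖) ^ (-((Module.finrank ℝ E + 1 : ℕ) : ℝ)) := by
    refine ⟨2 ^ (Module.finrank ℝ E + 1) * ((Finset.Iic (Module.finrank ℝ E + 1, 0)).sup
      fun m => SchwartzMap.seminorm ℝ m.1 m.2) Φ, by positivity, fun u => ?_⟩
    have h := SchwartzMap.one_add_le_sup_seminorm_apply (𝕜 := ℝ) (m := (Module.finrank ℝ E + 1, 0))
      (k := Module.finrank ℝ E + 1) (n := 0) le_rfl le_rfl Φ u
    rw [norm_iteratedFDeriv_zero] at h
    rw [Real.rpow_neg (by positivity), Real.rpow_natCast, ← div_eq_mul_inv,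
      le_div_iff₀ (by positivity)]
    linarith
  have hint := (integrable_one_add_norm (E := E) (μ := volume)
    (r := ((Module.finrank ℝ E + 1 : ℕ) : ℝ)) (by push_cast; linarith))
  have h0 : (0 : ℝ) = ∫ u : E, (0 : ℝ) := by simp
  rw [h0]
  unfold omega
  refine tendsto_integral_filter_of_dominated_convergence
    (fun u => A * 2 ^ (Module.finrank ℝ E + 1) * (1 + ‖u‖) ^ (-((Module.finrank ℝ E + 1 : ℕ) : ℝ))
      + A * (1 + ‖u‖) ^ (-((Module.finrank ℝ E + 1 : ℕ) : ℝ))) ?_ ?_ ?_ ?_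
  · refine Eventually.of_forall fun s => ?_
    have := Φ.continuous
    exact Continuous.aestronglyMeasurable (by fun_prop)
  · filter_upwards [Metric.ball_mem_nhds (0 : E) one_pos] with s hs
    refine Eventually.of_forall fun u => ?_
    rw [norm_norm]
    refine (norm_sub_le _ _).trans (add_le_add ((hA _).trans ?_) (hA u))
    rw [mul_assoc]
    refine mul_le_mul_of_nonneg_left ?_ hA0
    rw [Real.rpow_neg (by positivity), Real.rpow_natCast, Real.rpow_neg (by positivity),
      Real.rpow_natCast, ← div_eq_mul_inv, le_div_iff₀ (by positivity), inv_mul_le_iff₀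
      (by positivity), ← mul_pow]
    refine pow_le_pow_left₀ (by positivity) ?_ _
    have h1 : ‖u‖ ≤ ‖u - s‖ + ‖s‖ := by simpa using norm_add_le (u - s) s
    have h2 : ‖s‖ < 1 := by simpa using hs
    nlinarith [norm_nonneg (u - s)]
  · exact (hint.const_mul _).add (hint.const_mul _)
  · refine Eventually.of_forall fun u => ?_
    have h := (by have := Φ.continuous; fun_prop : Continuous fun s => ‖Φ (u - s) - Φ u‖).tendsto 0
    simpa using h

theorem omega_le (Φ : 𝓢(E, ℂ)) (s : E) : omega (Φ : E → ℂ) s ≤ 2 * ∫ u, ‖Φ u‖ := by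
  have h1 : Integrable (fun u => ‖Φ (u - s)‖) := (Φ.integrable.comp_sub_right s).norm
  have h2 : Integrable (fun u => ‖Φ u‖) := Φ.integrable.norm
  calc omega (Φ : E → ℂ) s ≤ ∫ u, (‖Φ (u - s)‖ + ‖Φ u‖) :=
        integral_mono_of_nonneg (Eventually.of_forall fun u => norm_nonneg _) (h1.add h2)
          (Eventually.of_forall fun u => norm_sub_le _ _)
    _ = 2 * ∫ u, ‖Φ u‖ := by
        rw [integral_add h1 h2, integral_sub_right_eq_self (fun u => ‖Φ u‖) s]; ring

theorem omega_nonneg (Φ : E → ℂ) (s : E) : 0 ≤ omega Φ s :=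
  integral_nonneg fun _ => norm_nonneg _

theorem omega_measurable (Φ : 𝓢(E, ℂ)) : StronglyMeasurable (omega (Φ : E → ℂ)) := by
  have h : Continuous fun p : E × E => ‖Φ (p.2 - p.1) - Φ p.2‖ := by
    have := Φ.continuous
    fun_prop
  exact h.stronglyMeasurable.integral_prod_right

variable {f : E → ℂ} {C : ℝ}

theorem corr_integrable (hf : StronglyMeasurable f) (hC : ∀ x, ‖f x‖ ≤ C) {Φ : E → ℂ}
    (hΦ : Integrable Φ) (x : E) : Integrable fun s => f s * Φ (s - x) :=
  (hΦ.comp_sub_right x).bdd_mul hf.aestronglyMeasurable (Eventually.of_forall hC)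

theorem corr_bound (hC : ∀ x, ‖f x‖ ≤ C) {Φ : E → ℂ}
    (hΦ : Integrable Φ) (x : E) : ‖corr f Φ x‖ ≤ C * ∫ u, ‖Φ u‖ := by
  rw [← integral_sub_right_eq_self (fun u => ‖Φ u‖) x, ← integral_const_mul]
  refine norm_integral_le_of_norm_le ((hΦ.comp_sub_right x).norm.const_mul C)
    (Eventually.of_forall fun s => ?_)
  rw [norm_mul]
  exact mul_le_mul_of_nonneg_right (hC s) (norm_nonneg _)

theorem corr_sub_le (hf : StronglyMeasurable f) (hC : ∀ x, ‖f x‖ ≤ C) (Φ : 𝓢(E, ℂ)) (x y : E) :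
    ‖corr f Φ x - corr f Φ y‖ ≤ C * omega (Φ : E → ℂ) (x - y) := by
  have hy : omega (Φ : E → ℂ) (x - y) = ∫ s, ‖Φ (s - x) - Φ (s - y)‖ := by
    unfold omega
    rw [← integral_sub_right_eq_self _ y]
    simp [sub_sub]
  unfold corr
  rw [← integral_sub (corr_integrable hf hC Φ.integrable x) (corr_integrable hf hC Φ.integrable y),
    hy, ← integral_const_mul]
  refine norm_integral_le_of_norm_le
    (((Φ.integrable.comp_sub_right x).sub (Φ.integrable.comp_sub_right y)).norm.const_mul C)
    (Eventually.of_forall fun s => ?_)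
  rw [← mul_sub, norm_mul]
  exact mul_le_mul_of_nonneg_right (hC s) (norm_nonneg _)

theorem corr_continuous (hf : StronglyMeasurable f) (hC : ∀ x, ‖f x‖ ≤ C) (Φ : 𝓢(E, ℂ)) :
    Continuous (corr f Φ) := by
  rw [continuous_iff_continuousAt]
  intro x
  rw [ContinuousAt, tendsto_iff_norm_sub_tendsto_zero]
  have h1 : Tendsto (fun y => y - x) (𝓝 x) (𝓝 0) := by
    simpa using (by fun_prop : Continuous fun y : E => y - x).tendsto x
  have h2 := ((omega_tendsto Φ).comp h1).const_mul C
  rw [mul_zero] at h2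
  exact squeeze_zero (fun _ => norm_nonneg _) (fun y => corr_sub_le hf hC Φ y x) h2

/-- If `f * g = 0`, then every correlation of `f` is also annihilated by convolution with `g`. -/
theorem corr_conv_eq_zero (hf : StronglyMeasurable f) (hC : ∀ x, ‖f x‖ ≤ C) {Φ g : E → ℂ}
    (hΦ : Integrable Φ) (hg : Integrable g) (hconv : ∀ x, ∫ y, f (x - y) * g y = 0) (x : E) :
    ∫ t, g t * corr f Φ (x - t) = 0 := by
  have h1 : ∀ t, g t * corr f Φ (x - t) = ∫ y, f (x + y - t) * (g t * Φ y) := by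
    intro t
    unfold corr
    rw [← integral_add_right_eq_self _ (x - t), ← integral_const_mul]
    congr 1 with y
    rw [add_sub_cancel_right, show y + (x - t) = x + y - t by abel]
    ring
  simp_rw [h1]
  rw [integral_integral_swap]
  · have h2 : ∀ y, ∫ t, f (x + y - t) * (g t * Φ y) = 0 := by
      intro y
      simp_rw [← mul_assoc]
      rw [integral_mul_const, hconv, zero_mul]
    simp [h2]
  · refine (hg.mul_prod hΦ).bdd_mul (c := C) ?_ (Eventually.of_forall fun p => hC _)
    exact (hf.comp_measurable (by fun_prop : Measurable fun p : E × E =>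
      x + p.2 - p.1)).aestronglyMeasurable

/-- Averaging modulated translates of `𝓕 φ` against `K` multiplies `φ` by a rescaled and
translated copy of `𝓕 K`. -/
theorem fourier_mod {K φ ψ : E → ℂ} (hK : Integrable K) (hφ : Integrable φ) (ξ : E) (ε : ℝ)
    (hψ : ∀ v, ψ v = φ v * 𝓕 K (ε • (v - ξ))) (y : E) :
    ∫ u, K u * (𝐞 (ε * inner ℝ ξ u) : ℂ) * 𝓕 φ (y + ε • u) = 𝓕 ψ y := by
  have h1 : ∀ u, K u * (𝐞 (ε * inner ℝ ξ u) : ℂ) * 𝓕 φ (y + ε • u) =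
      ∫ v, (𝐞 (ε * inner ℝ ξ u - inner ℝ v y - ε * inner ℝ v u) : ℂ) * (K u * φ v) := by
    intro u
    rw [Real.fourier_eq, ← integral_const_mul]
    congr 1 with v
    rw [Circle.smul_def, smul_eq_mul, inner_add_right, inner_smul_right,
      show ε * inner ℝ ξ u - inner ℝ v y - ε * inner ℝ v u =
        ε * inner ℝ ξ u + -(inner ℝ v y + ε * inner ℝ v u) by ring,
      AddChar.map_add_eq_mul, Circle.coe_mul]
    ring
  simp_rw [h1]
  rw [integral_integral_swap]
  · rw [Real.fourier_eq]
    congr 1 with v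
    rw [Circle.smul_def, smul_eq_mul, hψ, Real.fourier_eq, ← mul_assoc, ← integral_const_mul]
    congr 1 with u
    rw [Circle.smul_def, smul_eq_mul, inner_smul_right, inner_sub_right,
      show ε * inner ℝ ξ u - inner ℝ v y - ε * inner ℝ v u =
        -inner ℝ v y + -(ε * (inner ℝ u v - inner ℝ u ξ)) by
        rw [real_inner_comm u v, real_inner_comm u ξ]; ring,
      AddChar.map_add_eq_mul, Circle.coe_mul]
    ring
  · refine (hK.mul_prod hφ).bdd_mul (c := 1) ?_ (Eventually.of_forall fun p => (Circle.norm_coe _).le)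
    refine Continuous.aestronglyMeasurable ?_
    exact (continuous_subtype_val.comp Real.continuous_fourierChar).comp (by fun_prop)

/-- Averaging modulated translates of `corr f (𝓕 φ)` against `K` has the effect of multiplying `φ`
by a rescaled and translated copy of `𝓕 K`. -/
theorem corr_mod (hf : StronglyMeasurable f) (hC : ∀ x, ‖f x‖ ≤ C) {K φ ψ : E → ℂ}
    (hK : Integrable K) (hφ : Integrable φ) (hΦ : Integrable (𝓕 φ)) (ξ : E) (ε : ℝ)
    (hψ : ∀ v, ψ v = φ v * 𝓕 K (ε • (v - ξ))) (x : E) :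
    ∫ u, K u * (𝐞 (ε * inner ℝ ξ u) : ℂ) * corr f (𝓕 φ) (x - ε • u) = corr f (𝓕 ψ) x := by
  have h1 : ∀ u, K u * (𝐞 (ε * inner ℝ ξ u) : ℂ) * corr f (𝓕 φ) (x - ε • u) =
      ∫ s, f s * (K u * (𝐞 (ε * inner ℝ ξ u) : ℂ) * 𝓕 φ (s - x + ε • u)) := by
    intro u
    unfold corr
    rw [← integral_const_mul]
    congr 1 with s
    rw [show s - (x - ε • u) = s - x + ε • u by abel]
    ring
  have hc : Continuous fun u : E => (𝐞 (ε * inner ℝ ξ u) : ℂ) :=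
    (continuous_subtype_val.comp Real.continuous_fourierChar).comp (by fun_prop)
  have hK' : Integrable fun u => K u * (𝐞 (ε * inner ℝ ξ u) : ℂ) :=
    hK.mul_bdd hc.aestronglyMeasurable (c := 1) (Eventually.of_forall fun p => (Circle.norm_coe _).le)
  simp_rw [h1]
  rw [integral_integral_swap]
  · unfold corr
    congr 1 with s
    rw [integral_const_mul, fourier_mod hK hφ ξ ε hψ]
    -- the product integrand is a shear of a tensor product of integrable functions
  · have hmp : MeasurePreserving (fun p : E × E => (p.1, p.2 - x + ε • p.1))
        (volume.prod volume) (volume.prod volume) := by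
      refine (MeasurePreserving.id volume).skew_product
        (g := fun u s => s - x + ε • u) (by fun_prop) (Eventually.of_forall fun u => ?_)
      exact ((measurePreserving_add_right volume (ε • u)).comp
        (measurePreserving_sub_right volume x)).map_eq
    refine (hmp.integrable_comp_of_integrable (hK'.mul_prod hΦ)).bdd_mul (c := C) ?_
      (Eventually.of_forall fun p => hC _)
    exact (hf.comp_measurable measurable_snd).aestronglyMeasurable

/-- A smooth cutoff `X` together with its inverse Fourier transform `K`. -/
theorem exists_cutoff : ∃ X K : 𝓢(E, ℂ), (∀ v, 𝓕 (K : E → ℂ) v = X v) ∧ HasCompactSupport X ∧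
    ∀ v ∈ Metric.closedBall (0 : E) 1, X v = 1 := by
  let b : ContDiffBump (0 : E) := ⟨1, 2, one_pos, one_lt_two⟩
  have hcs : HasCompactSupport fun v => (b v : ℂ) :=
    b.hasCompactSupport.comp_left (g := fun r : ℝ => (r : ℂ)) (by simp)
  let X : 𝓢(E, ℂ) := hcs.toSchwartzMap (Complex.ofRealCLM.contDiff.comp b.contDiff)
  refine ⟨X, 𝓕⁻ X, fun v => ?_, hcs, fun v hv => ?_⟩
  · rw [← SchwartzMap.fourier_coe]
    simp
  · change (b v : ℂ) = 1
    rw [b.one_of_mem_closedBall hv]; simp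

/-- Near a point where `𝓕 g` does not vanish, the Fourier transform of `f` is zero. The radius `δ`
depends only on `g` and `ξ`, through the decay of `∫ |g t| ω(δ t) dt`. -/
theorem local_vanish (hf : StronglyMeasurable f) (hC : ∀ x, ‖f x‖ ≤ C) {g : E → ℂ}
    (hg : Integrable g) (hconv : ∀ x, ∫ y, f (x - y) * g y = 0) (ξ : E) (hξ : 𝓕 g ξ ≠ 0) :
    ∃ δ > 0, ∀ φ : 𝓢(E, ℂ), tsupport φ ⊆ Metric.ball ξ δ → ∫ x, f x * 𝓕 (φ : E → ℂ) x = 0 := by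
  obtain ⟨X, K, hKX, -, hX1⟩ := exists_cutoff (E := E)
  have hlim : Tendsto (fun n : ℕ => ∫ t, ‖g t‖ * omega (K : E → ℂ) ((1 / ((n : ℝ) + 1)) • t))
      atTop (𝓝 0) := by
    have h0 : (0 : ℝ) = ∫ t : E, ‖g t‖ * 0 := by simp
    rw [h0]
    refine tendsto_integral_of_dominated_convergence (fun t => ‖g t‖ * (2 * ∫ u, ‖K u‖)) ?_ ?_ ?_ ?_
    · intro n
      exact hg.aestronglyMeasurable.norm.mul
        ((omega_measurable K).comp_measurable (by fun_prop)).aestronglyMeasurable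
    · exact hg.norm.mul_const _
    · intro n
      refine Eventually.of_forall fun t => ?_
      rw [norm_mul, norm_norm, Real.norm_of_nonneg (omega_nonneg _ _)]
      exact mul_le_mul_of_nonneg_left (omega_le K _) (norm_nonneg _)
    · refine Eventually.of_forall fun t => ?_
      have h1 : Tendsto (fun n : ℕ => (1 / ((n : ℝ) + 1)) • t) atTop (𝓝 0) := by
        simpa using (tendsto_one_div_add_atTop_nhds_zero_nat (𝕜 := ℝ)).smul_const t
      exact ((omega_tendsto K).comp h1).const_mul _
  obtain ⟨n, hn⟩ := (hlim.eventually (gt_mem_nhds (half_pos (norm_pos_iff.2 hξ)))).exists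
  have hn0 : (0 : ℝ) < n + 1 := by positivity
  -- the cutoff dilated by `ε = n + 1` equals `1` on the ball of radius `δ = 1 / ε`
  set δ : ℝ := 1 / ((n : ℝ) + 1) with hδ
  set ε : ℝ := (n : ℝ) + 1 with hε
  have hδ0 : 0 < δ := by positivity
  have hεδ : ε * δ = 1 := by rw [hδ]; field_simp
  refine ⟨δ, hδ0, fun φ hφ => ?_⟩
  have hΦ : Integrable (𝓕 (φ : E → ℂ)) := (𝓕 φ).integrable
  have hFc : Continuous (corr f (𝓕 (φ : E → ℂ))) := corr_continuous hf hC (𝓕 φ)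
  have hrep := corr_mod hf hC K.integrable φ.integrable hΦ ξ ε (ψ := φ) (fun v => by
    by_cases hv : v ∈ tsupport φ
    · have h1 := hφ hv
      rw [hKX, hX1, mul_one]
      rw [mem_closedBall_zero_iff, norm_smul, Real.norm_of_nonneg hn0.le, ← hεδ]
      exact mul_le_mul_of_nonneg_left (mem_ball_iff_norm.1 h1).le hn0.le
    · rw [image_eq_zero_of_notMem_tsupport hv, zero_mul])
  have hFb : ∀ x, ‖corr f (𝓕 (φ : E → ℂ)) x‖ ≤ C * ∫ u, ‖𝓕 (φ : E → ℂ) u‖ :=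
    fun x => corr_bound hC hΦ x
  generalize hF : corr f (𝓕 (φ : E → ℂ)) = F at *
  have hc : Continuous fun r : ℝ => (𝐞 r : ℂ) :=
    continuous_subtype_val.comp Real.continuous_fourierChar
  have hint : ∀ (a : E) (x : E), Integrable fun u =>
      K (u - a) * ((𝐞 (ε * inner ℝ ξ u) : ℂ) * F (x - ε • u)) := by
    intro a x
    refine (K.integrable.comp_sub_right a).mul_bdd ?_
      (c := C * ∫ u, ‖𝓕 (φ : E → ℂ) u‖) (Eventually.of_forall fun u => ?_)
    · exact ((hc.comp (by fun_prop)).mul (hFc.comp (by fun_prop))).aestronglyMeasurable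
    · rw [norm_mul, Circle.norm_coe, one_mul]
      exact hFb _
  have hdiff : ∀ M : ℝ, (∀ x, ‖F x‖ ≤ M) → ∀ x t,
      ‖(𝐞 (-inner ℝ t ξ) : ℂ) * F x - F (x - t)‖ ≤ M * omega (K : E → ℂ) (δ • t) := by
    intro M hM x t
    have h1 : F x = ∫ u, K (u - 0) * ((𝐞 (ε * inner ℝ ξ u) : ℂ) * F (x - ε • u)) := by
      rw [← hrep x]
      simp [mul_assoc]
    have h2 : F (x - t) = (𝐞 (-inner ℝ t ξ) : ℂ) *
        ∫ u, K (u - δ • t) * ((𝐞 (ε * inner ℝ ξ u) : ℂ) * F (x - ε • u)) := by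
      rw [← hrep (x - t), ← integral_sub_right_eq_self _ (δ • t), ← integral_const_mul]
      congr 1 with u
      have h3 : ε * inner ℝ ξ (u - δ • t) = -inner ℝ t ξ + ε * inner ℝ ξ u := by
        rw [inner_sub_right, inner_smul_right, mul_sub, ← mul_assoc, hεδ, real_inner_comm ξ t]
        ring
      have h4 : x - t - ε • (u - δ • t) = x - ε • u := by
        rw [smul_sub, smul_smul, hεδ, one_smul]; abel
      rw [h3, h4, AddChar.map_add_eq_mul, Circle.coe_mul]
      ring
    rw [h2, h1, ← mul_sub, norm_mul, Circle.norm_coe, one_mul,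
      ← integral_sub (hint 0 x) (hint (δ • t) x), omega, ← integral_const_mul]
    refine norm_integral_le_of_norm_le
      (((K.integrable.comp_sub_right (δ • t)).sub K.integrable).norm.const_mul M)
      (Eventually.of_forall fun u => ?_)
    rw [← sub_mul, norm_mul, norm_mul, Circle.norm_coe, one_mul, mul_comm, sub_zero, norm_sub_rev]
    exact mul_le_mul_of_nonneg_right (hM _) (norm_nonneg _)
  have hhalf : ∀ M : ℝ, (∀ x, ‖F x‖ ≤ M) → ∀ x, ‖F x‖ ≤ M / 2 := by
    intro M hM x
    have hM0 : 0 ≤ M := (norm_nonneg _).trans (hM x)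
    have hg1 : Integrable fun t => g t * ((𝐞 (-inner ℝ t ξ) : ℂ) * F x) := by
      refine hg.mul_bdd ?_ (c := M) (Eventually.of_forall fun u => ?_)
      · exact ((hc.comp (by fun_prop)).mul continuous_const).aestronglyMeasurable
      · rw [norm_mul, Circle.norm_coe, one_mul]
        exact hM x
    have hg2 : Integrable fun t => g t * F (x - t) :=
      hg.mul_bdd (hFc.comp (by fun_prop)).aestronglyMeasurable (c := M)
        (Eventually.of_forall fun u => hM _)
    have h0 : ∫ t, g t * F (x - t) = 0 := by
      rw [← hF]; exact corr_conv_eq_zero hf hC hΦ hg hconv x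
    have h1 : 𝓕 g ξ * F x = ∫ t, g t * ((𝐞 (-inner ℝ t ξ) : ℂ) * F x - F (x - t)) := by
      simp_rw [mul_sub]
      rw [integral_sub hg1 hg2, h0, sub_zero, Real.fourier_eq, ← integral_mul_const]
      congr 1 with t
      rw [Circle.smul_def, smul_eq_mul]
      ring
    have h2 : ‖𝓕 g ξ * F x‖ ≤ M * ∫ t, ‖g t‖ * omega (K : E → ℂ) (δ • t) := by
      rw [h1, ← integral_const_mul]
      refine norm_integral_le_of_norm_le ?_ (Eventually.of_forall fun t => ?_)
      · refine (hg.norm.mul_bdd (c := 2 * ∫ u, ‖K u‖) ((omega_measurable K).comp_measurable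
          (by fun_prop)).aestronglyMeasurable (Eventually.of_forall fun t => ?_)).const_mul M
        rw [Function.comp_apply, Real.norm_of_nonneg (omega_nonneg _ _)]
        exact omega_le K _
      · rw [norm_mul]
        calc ‖g t‖ * _ ≤ ‖g t‖ * (M * omega (K : E → ℂ) (δ • t)) :=
              mul_le_mul_of_nonneg_left (hdiff M hM x t) (norm_nonneg _)
          _ = _ := by ring
    have h3 := h2.trans (mul_le_mul_of_nonneg_left hn.le hM0)
    rw [norm_mul] at h3
    have h4 : 0 < ‖𝓕 g ξ‖ := norm_pos_iff.2 hξ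
    nlinarith
  have hbdd : BddAbove (Set.range fun x => ‖F x‖) := ⟨_, by rintro _ ⟨x, rfl⟩; exact hFb x⟩
  have hS : (⨆ x, ‖F x‖) ≤ (⨆ x, ‖F x‖) / 2 := ciSup_le (hhalf _ fun x => le_ciSup hbdd x)
  have h0 : ‖F 0‖ ≤ 0 := (le_ciSup hbdd 0).trans (by linarith)
  have h1 : F 0 = 0 := norm_le_zero_iff.1 h0
  rw [← hF] at h1
  simpa [corr] using h1

/-- Local vanishing implies vanishing on compactly supported functions, by a smooth partition of
unity. -/
theorem compact_vanish (hf : StronglyMeasurable f) (hC : ∀ x, ‖f x‖ ≤ C) (φ : 𝓢(E, ℂ))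
    (hcs : HasCompactSupport φ)
    (hloc : ∀ ξ ∈ tsupport φ, ∃ δ > 0, ∀ ψ : 𝓢(E, ℂ), tsupport ψ ⊆ Metric.ball ξ δ →
      ∫ x, f x * 𝓕 (ψ : E → ℂ) x = 0) :
    ∫ x, f x * 𝓕 (φ : E → ℂ) x = 0 := by
  choose! δ hδ hv using hloc
  obtain ⟨t, htK, hcov⟩ := hcs.isCompact.elim_nhds_subcover (fun ξ => Metric.ball ξ (δ ξ))
    (fun ξ hξ => Metric.ball_mem_nhds ξ (hδ ξ hξ))
  obtain ⟨ρ, hρ⟩ := SmoothPartitionOfUnity.exists_isSubordinate (modelWithCornersSelf ℝ E)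
    (isClosed_tsupport φ) (fun i : t => Metric.ball (i : E) (δ i)) (fun i => Metric.isOpen_ball)
    (fun x hx => by simpa using hcov hx)
  have hsm : ∀ i, ContDiff ℝ ∞ fun x => (ρ i x : ℂ) * φ x := fun i =>
    (Complex.ofRealCLM.contDiff.comp (ρ i).contMDiff.contDiff).mul (φ.smooth ⊤)
  have hcs' : ∀ i, HasCompactSupport fun x => (ρ i x : ℂ) * φ x := fun i => hcs.mul_left
  let ψ : t → 𝓢(E, ℂ) := fun i => (hcs' i).toSchwartzMap (hsm i)
  have hψ : ∀ i x, ψ i x = (ρ i x : ℂ) * φ x := fun i x => rfl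
  have hsum : φ = ∑ i, ψ i := by
    ext x
    rw [sum_apply]
    simp_rw [hψ]
    rw [← Finset.sum_mul]
    by_cases hx : x ∈ tsupport φ
    · have h1 := ρ.sum_finsupport' x hx (Finset.subset_univ _)
      rw [← Complex.ofReal_sum, h1]; simp
    · rw [image_eq_zero_of_notMem_tsupport hx, mul_zero]
  have hz : ∀ i, ∫ x, f x * 𝓕 (ψ i : E → ℂ) x = 0 := by
    intro i
    refine hv i (htK i i.2) (ψ i) (Set.Subset.trans ?_ (hρ i))
    refine closure_mono fun x hx => ?_
    rw [Function.mem_support, hψ] at hx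
    intro h
    exact hx (by simp [h])
  have hF : ∀ x, 𝓕 (φ : E → ℂ) x = ∑ i, 𝓕 (ψ i : E → ℂ) x := by
    intro x
    have h1 : fourierTransformCLM ℂ φ = ∑ i, fourierTransformCLM ℂ (ψ i) := by
      rw [hsum, map_sum]
    have h2 := congrArg (fun χ : 𝓢(E, ℂ) => χ x) h1
    simpa [sum_apply, SchwartzMap.fourier_coe] using h2
  simp_rw [hF, Finset.mul_sum]
  rw [integral_finsetSum _ fun i _ => by
    simpa using corr_integrable hf hC (𝓕 (ψ i)).integrable 0]
  simp [hz]

/-- Removes the compactness of the support: by `corr_mod`, pairing `f` with the Fourier transform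
of a wide cutoff of `φ` averages the continuous function `corr f (𝓕 φ)` near `0`. -/
theorem vanish_of_compact (hf : StronglyMeasurable f) (hC : ∀ x, ‖f x‖ ≤ C) (φ : 𝓢(E, ℂ))
    (hcpt : ∀ ψ : 𝓢(E, ℂ), HasCompactSupport ψ → tsupport ψ ⊆ tsupport φ →
      ∫ x, f x * 𝓕 (ψ : E → ℂ) x = 0) :
    ∫ x, f x * 𝓕 (φ : E → ℂ) x = 0 := by
  obtain ⟨X, K, hKX, hXc, hX1⟩ := exists_cutoff (E := E)
  have hΦ : Integrable (𝓕 (φ : E → ℂ)) := (𝓕 φ).integrable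
  have hFc : Continuous (corr f (𝓕 (φ : E → ℂ))) := corr_continuous hf hC (𝓕 φ)
  have hzero : ∀ n : ℕ, ∫ u, K u * corr f (𝓕 (φ : E → ℂ)) (-((1 / ((n : ℝ) + 1)) • u)) = 0 := by
    intro n
    have hne : (1 / ((n : ℝ) + 1)) ≠ 0 := by positivity
    have hcs : HasCompactSupport fun v => φ v * X ((1 / ((n : ℝ) + 1)) • v) :=
      (hXc.comp_smul hne).mul_left
    have hsm : ContDiff ℝ ∞ fun v => φ v * X ((1 / ((n : ℝ) + 1)) • v) :=
      (φ.smooth ⊤).mul ((X.smooth ⊤).comp (contDiff_const_smul _))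
    have h1 := corr_mod hf hC K.integrable φ.integrable hΦ 0 (1 / ((n : ℝ) + 1))
      (ψ := hcs.toSchwartzMap hsm) (fun v => by rw [hKX, sub_zero]; rfl) 0
    have h2 := hcpt (hcs.toSchwartzMap hsm) hcs (tsupport_mul_subset_left)
    rw [corr, show ∫ s, f s * 𝓕 (hcs.toSchwartzMap hsm : E → ℂ) (s - 0) = 0 by simpa using h2] at h1
    simpa using h1
  have hlim : Tendsto (fun n : ℕ => ∫ u, K u *
      corr f (𝓕 (φ : E → ℂ)) (-((1 / ((n : ℝ) + 1)) • u))) atTop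
      (𝓝 (∫ u, K u * corr f (𝓕 (φ : E → ℂ)) 0)) := by
    refine tendsto_integral_of_dominated_convergence
      (fun u => ‖K u‖ * (C * ∫ u, ‖𝓕 (φ : E → ℂ) u‖)) ?_ ?_ ?_ ?_
    · intro n
      exact (K.continuous.mul (hFc.comp (by fun_prop))).aestronglyMeasurable
    · exact K.integrable.norm.mul_const _
    · intro n
      refine Eventually.of_forall fun u => ?_
      rw [norm_mul]
      exact mul_le_mul_of_nonneg_left (corr_bound hC hΦ _) (norm_nonneg _)
    · refine Eventually.of_forall fun u => ?_
      have h1 : Tendsto (fun n : ℕ => -((1 / ((n : ℝ) + 1)) • u)) atTop (𝓝 0) := by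
        simpa using ((tendsto_one_div_add_atTop_nhds_zero_nat (𝕜 := ℝ)).smul_const u).neg
      exact ((hFc.tendsto 0).comp h1).const_mul _
  have hK1 : ∫ u, K u = 1 := by
    have h1 := hKX 0
    rw [hX1 0 (by simp), Real.fourier_eq] at h1
    simpa using h1
  simp_rw [hzero] at hlim
  have h1 := tendsto_nhds_unique hlim tendsto_const_nhds
  rw [integral_mul_const, hK1, one_mul] at h1
  simpa [corr] using h1

end Wiener

/-- Wiener: if `f ∈ L^∞` and `f * g = 0` for all `g` in a set `Y ⊆ L¹`,
then the support of the tempered distribution `f̂` is contained in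
`Z(Y) = ⋂_{g ∈ Y} {ξ : ĝ ξ = 0}`; i.e. `⟨f, 𝓕 φ⟩ = 0` for every Schwartz `φ` supported
outside of `Z(Y)`. -/
theorem stmt6 (n : ℕ) (f : EuclideanSpace ℝ (Fin n) → ℂ)
    (Y : Set (EuclideanSpace ℝ (Fin n) → ℂ))
    (hmeas : AEStronglyMeasurable f (volume : Measure (EuclideanSpace ℝ (Fin n))))
    (hbdd : ∃ C : ℝ, ∀ᵐ x ∂(volume : Measure (EuclideanSpace ℝ (Fin n))), ‖f x‖ ≤ C)
    (hY : ∀ g ∈ Y, Integrable g)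
    (hconv : ∀ g ∈ Y, ∀ x : EuclideanSpace ℝ (Fin n), ∫ y, f (x - y) * g y = 0) :
    ∀ φ : 𝓢(EuclideanSpace ℝ (Fin n), ℂ),
      tsupport φ ⊆ {ξ : EuclideanSpace ℝ (Fin n) | ∀ g ∈ Y, 𝓕 g ξ = 0}ᶜ →
      ∫ x, f x * (fourierTransformCLM ℂ φ) x = 0 := by
  intro φ hφ
  obtain ⟨C, hC⟩ := hbdd
  -- replace `f` by a strongly measurable representative that is bounded everywhere
  obtain ⟨f', hf', hC', hff'⟩ : ∃ f' : EuclideanSpace ℝ (Fin n) → ℂ, StronglyMeasurable f' ∧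
      (∀ x, ‖f' x‖ ≤ max C 0) ∧ f =ᵐ[volume] f' := by
    refine ⟨{x | ‖hmeas.mk f x‖ ≤ C}.indicator (hmeas.mk f), ?_, fun x => ?_, ?_⟩
    · exact hmeas.stronglyMeasurable_mk.indicator
        (measurableSet_le hmeas.stronglyMeasurable_mk.norm.measurable measurable_const)
    · by_cases hx : ‖hmeas.mk f x‖ ≤ C
      · rw [Set.indicator_of_mem (by exact hx)]
        exact hx.trans (le_max_left _ _)
      · rw [Set.indicator_of_notMem (by exact hx)]
        simp
    · filter_upwards [hmeas.ae_eq_mk, hC] with x hx hxC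
      rw [Set.indicator_of_mem (by rw [Set.mem_ofPred_eq, ← hx]; exact hxC), hx]
  have hconv' : ∀ g ∈ Y, ∀ x, ∫ y, f' (x - y) * g y = 0 := by
    intro g hg x
    rw [← hconv g hg x]
    refine integral_congr_ae ?_
    have h1 := (Measure.measurePreserving_sub_left volume x).quasiMeasurePreserving.ae_eq_comp hff'
    filter_upwards [h1] with y hy
    have hy' : f (x - y) = f' (x - y) := hy
    rw [hy']
  have h1 : ∫ x, f x * (fourierTransformCLM ℂ φ) x =
      ∫ x, f' x * 𝓕 (φ : EuclideanSpace ℝ (Fin n) → ℂ) x := by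
    refine integral_congr_ae ?_
    filter_upwards [hff'] with x hx
    rw [hx]
    rfl
  rw [h1]
  refine vanish_of_compact hf' hC' φ fun ψ hψc hψ => compact_vanish hf' hC' ψ hψc fun ξ hξ => ?_
  have h2 := hφ (hψ hξ)
  simp only [Set.mem_compl_iff, Set.mem_ofPred_eq, not_forall] at h2
  obtain ⟨g, hg, hgξ⟩ := h2
  exact local_vanish hf' hC' (hY g hg) (hconv' g hg) ξ hgξ
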